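/- For every fixed integer n ≥ 3, if P is a polynomial with rational coefficients such that P(r) = S_n(r) for every natural number r, then P(−k) = 0 for every integer k with 1 ≤ k ≤ n − 2. -/

import Mathlib

/-- `S n r` is the number of `n × n` matrices with nonnegative integer entries,
all diagonal entries zero, and every row sum and every column sum equal to `r`. -/
noncomputable def S (n r : ℕ) : ℕ :=
  Nat.card {M : Matrix (Fin n) (Fin n) ℕ //
    (∀ i, M i i = 0) ∧ (∀ i, ∑ j, M i j = r) ∧ (∀ j, ∑ i, M i j = r)}

namespace Soccer

/-- Matrices supported in `E`, nonzero on `W`, with all row and column sums `r`. -/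
def NS (n : ℕ) (E W : Finset (Fin n × Fin n)) (r : ℤ) : Set (Matrix (Fin n) (Fin n) ℕ) :=
  {M | (∀ i j, (i, j) ∉ E → M i j = 0) ∧ (∀ i j, (i, j) ∈ W → M i j ≠ 0) ∧
    (∀ i, ((∑ j, M i j : ℕ) : ℤ) = r) ∧ (∀ j, ((∑ i, M i j : ℕ) : ℤ) = r)}

/-- The number of such matrices. -/
noncomputable def N (n : ℕ) (E W : Finset (Fin n × Fin n)) (r : ℤ) : ℚ :=
  ((NS n E W r).ncard : ℚ)

/-- `g` agrees with a polynomial on the integers `≥ 1 - s`. -/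
def Good (s : ℕ) (g : ℤ → ℚ) : Prop :=
  ∃ p : Polynomial ℚ, ∀ r : ℤ, 1 - (s : ℤ) ≤ r → g r = p.eval (r : ℚ)

lemma NS_finite (n : ℕ) (E W : Finset (Fin n × Fin n)) (r : ℤ) : (NS n E W r).Finite := by
  have : (Set.pi Set.univ (fun _ : Fin n => Set.pi Set.univ
      (fun _ : Fin n => Set.Iic r.toNat))).Finite := by
    apply Set.Finite.pi
    intro i
    apply Set.Finite.pi
    intro j
    exact Set.finite_Iic _
  refine this.subset ?_
  rintro M ⟨_, _, h, _⟩
  intro i _ j _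
  have h1 : M i j ≤ ∑ j, M i j :=
    Finset.single_le_sum (f := fun j => M i j) (fun _ _ => Nat.zero_le _) (Finset.mem_univ j)
  have h2 := h i
  simp only [Set.mem_Iic]
  omega

lemma Good.add {s : ℕ} {f g : ℤ → ℚ} (hf : Good s f) (hg : Good s g) :
    Good s (fun r => f r + g r) := by
  obtain ⟨p, hp⟩ := hf
  obtain ⟨q, hq⟩ := hg
  exact ⟨p + q, fun r hr => by simp [hp r hr, hq r hr]⟩

lemma Good.sub {s : ℕ} {f g : ℤ → ℚ} (hf : Good s f) (hg : Good s g) :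
    Good s (fun r => f r - g r) := by
  obtain ⟨p, hp⟩ := hf
  obtain ⟨q, hq⟩ := hg
  exact ⟨p - q, fun r hr => by simp [hp r hr, hq r hr]⟩

lemma antidiff (q : Polynomial ℚ) :
    ∃ p : Polynomial ℚ, ∀ x : ℚ, p.eval (1 + x) - p.eval x = q.eval x := by
  induction q using Polynomial.induction_on' with
  | add a b ha hb =>
    obtain ⟨p, hp⟩ := ha
    obtain ⟨q, hq⟩ := hb
    refine ⟨p + q, fun x => ?_⟩
    simp only [Polynomial.eval_add, ← hp x, ← hq x]
    ring
  | monomial m a =>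
    refine ⟨Polynomial.C (a / (m + 1)) * Polynomial.bernoulli (m + 1), fun x => ?_⟩
    have h := Polynomial.bernoulli_eval_one_add (m + 1) x
    simp only [Polynomial.eval_mul, Polynomial.eval_C, Polynomial.eval_monomial, h]
    have : (m : ℚ) + 1 ≠ 0 := by positivity
    push_cast
    field_simp
    ring

lemma good_of_diff {s : ℕ} {g : ℤ → ℚ} (h : Good s (fun r => g r - g (r - 1))) :
    Good (s + 1) g := by
  obtain ⟨q, hq⟩ := h
  obtain ⟨p, hp⟩ := antidiff (q.comp (Polynomial.X + 1))
  refine ⟨p + Polynomial.C (g (-(s : ℤ)) - p.eval (-(s : ℚ))), ?_⟩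
  have key : ∀ k : ℕ, g (-(s : ℤ) + k) =
      (p + Polynomial.C (g (-(s : ℤ)) - p.eval (-(s : ℚ)))).eval (-(s : ℚ) + k) := by
    intro k
    induction k with
    | zero => simp
    | succ k ih =>
      have h1 := hq (-(s : ℤ) + k + 1) (by omega)
      have h2 := hp (-(s : ℚ) + k)
      simp only [Polynomial.eval_add, Polynomial.eval_C, Polynomial.eval_comp,
        Polynomial.eval_X, Polynomial.eval_one, add_sub_cancel_right] at h1 h2 ih ⊢
      push_cast at h1 ⊢
      rw [← add_assoc, ← add_assoc]
      rw [add_comm (1 : ℚ)] at h2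
      linarith
  intro r hr
  obtain ⟨k, hk⟩ := Int.eq_ofNat_of_zero_le (a := r + s) (by push_cast at hr; omega)
  have h1 := key k
  have h2 : r = -(s : ℤ) + k := by omega
  rw [h2, h1]
  push_cast
  rfl

lemma N_split (n : ℕ) (E W : Finset (Fin n × Fin n)) (e : Fin n × Fin n) (r : ℤ) (he : e ∉ W) :
    N n E W r = N n E (insert e W) r + N n (E.erase e) W r := by
  have hd : Disjoint (NS n E (insert e W) r) (NS n (E.erase e) W r) := by
    rw [Set.disjoint_left]
    rintro M ⟨_, h1, _⟩ ⟨h2, _⟩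
    exact h1 e.1 e.2 (by simp) (h2 e.1 e.2 (by simp))
  have hu : NS n E W r = NS n E (insert e W) r ∪ NS n (E.erase e) W r := by
    ext M
    constructor
    · rintro ⟨h1, h2, h3⟩
      by_cases h0 : M e.1 e.2 = 0
      · right
        refine ⟨fun i j hij => ?_, h2, h3⟩
        by_cases hc : (i, j) = e
        · subst hc; exact h0
        · exact h1 i j (fun hE => hij (Finset.mem_erase.2 ⟨hc, hE⟩))
      · left
        refine ⟨h1, fun i j hij => ?_, h3⟩
        rcases Finset.mem_insert.1 hij with hc | hc
        · subst hc; exact h0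
        · exact h2 i j hc
    · rintro (⟨h1, h2, h3⟩ | ⟨h1, h2, h3⟩)
      · exact ⟨h1, fun i j hij => h2 i j (Finset.mem_insert_of_mem hij), h3⟩
      · exact ⟨fun i j hij => h1 i j (fun hE => hij (Finset.mem_of_mem_erase hE)), h2, h3⟩
  unfold N
  rw [hu, Set.ncard_union_eq hd (NS_finite _ _ _ _) (NS_finite _ _ _ _)]
  push_cast
  rfl

lemma good_W {n s : ℕ} (W : Finset (Fin n × Fin n)) : ∀ E : Finset (Fin n × Fin n),
    (∀ U ⊆ W, U.Nonempty → Good s (N n (E \ U) ∅)) →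
    Good s (fun r => N n E ∅ r - N n E W r) := by
  classical
  induction W using Finset.induction_on with
  | empty => intro E _; exact ⟨0, fun r _ => by simp⟩
  | insert e W he ih =>
    intro E h
    have h1 := ih E (fun U hU => h U (hU.trans (Finset.subset_insert _ _)))
    have h2 := ih (E.erase e) (fun U hU _ => by
      have := h (insert e U) (Finset.insert_subset_insert _ hU) (by simp)
      have h3 : E.erase e \ U = E \ insert e U := by
        ext x; simp only [Finset.mem_sdiff, Finset.mem_erase, Finset.mem_insert]; tauto
      rwa [h3])
    have h4 : Good s (N n (E.erase e) ∅) := by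
      have := h {e} (by simp) (by simp)
      rwa [← Finset.erase_eq] at this
    have h5 := h1.add (h4.sub h2)
    convert h5 using 2 with r
    rw [N_split n E W e r he]
    ring

/-- The graph of a permutation. -/
def gr {n : ℕ} (σ : Equiv.Perm (Fin n)) : Finset (Fin n × Fin n) :=
  Finset.univ.filter (fun e => σ e.1 = e.2)

lemma mem_gr {n : ℕ} (σ : Equiv.Perm (Fin n)) (e : Fin n × Fin n) : e ∈ gr σ ↔ σ e.1 = e.2 := by
  simp [gr]

/-- The permutation matrix. -/
def pmat {n : ℕ} (σ : Equiv.Perm (Fin n)) : Matrix (Fin n) (Fin n) ℕ :=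
  fun i j => if σ i = j then 1 else 0

lemma pmat_row {n : ℕ} (σ : Equiv.Perm (Fin n)) (i) : ∑ j, pmat σ i j = 1 := by
  simp [pmat]

lemma pmat_col {n : ℕ} (σ : Equiv.Perm (Fin n)) (j) : ∑ i, pmat σ i j = 1 := by
  have : ∀ i, pmat σ i j = if i = σ.symm j then 1 else 0 := by
    intro i
    simp only [pmat, Equiv.eq_symm_apply]
  simp [this]

lemma N_shift {n : ℕ} (E : Finset (Fin n × Fin n)) (σ : Equiv.Perm (Fin n)) (h : gr σ ⊆ E)
    (r : ℤ) : N n E (gr σ) r = N n E ∅ (r - 1) := by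
  have hi : NS n E (gr σ) r = (fun M => M + pmat σ) '' NS n E ∅ (r - 1) := by
    ext M
    constructor
    · rintro ⟨h1, h2, h3, h4⟩
      have hle : ∀ i j, pmat σ i j ≤ M i j := by
        intro i j
        unfold pmat
        split_ifs with hc
        · exact Nat.one_le_iff_ne_zero.2 (h2 i j (by simp [gr, hc]))
        · exact Nat.zero_le _
      have hadd : (Matrix.of fun i j => M i j - pmat σ i j) + pmat σ = M := by
        ext i j
        exact Nat.sub_add_cancel (hle i j)
      have ha : ∀ i j, M i j = (M i j - pmat σ i j) + pmat σ i j := fun i j =>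
        (Nat.sub_add_cancel (hle i j)).symm
      refine ⟨Matrix.of fun i j => M i j - pmat σ i j, ⟨fun i j hij => ?_, by simp, fun i => ?_,
        fun j => ?_⟩, hadd⟩
      · simp [h1 i j hij]
      · have := h3 i
        rw [Finset.sum_congr rfl (fun j _ => ha i j), Finset.sum_add_distrib, pmat_row] at this
        simp only [Matrix.of_apply]
        push_cast at this ⊢
        linarith
      · have := h4 j
        rw [Finset.sum_congr rfl (fun i _ => ha i j), Finset.sum_add_distrib, pmat_col] at this
        simp only [Matrix.of_apply]
        push_cast at this ⊢
        linarith
    · rintro ⟨M, ⟨h1, _, h3, h4⟩, rfl⟩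
      refine ⟨fun i j hij => ?_, fun i j hij => ?_, fun i => ?_, fun j => ?_⟩
      · have : σ i ≠ j := fun hc => hij (h (by simp [gr, hc]))
        simp [h1 i j hij, pmat, this]
      · have : σ i = j := by simpa [gr] using hij
        simp [pmat, this]
      · simp only [Matrix.add_apply, Finset.sum_add_distrib, pmat_row]
        have := h3 i
        push_cast at this ⊢
        linarith
      · simp only [Matrix.add_apply, Finset.sum_add_distrib, pmat_col]
        have := h4 j
        push_cast at this ⊢
        linarith
  unfold N
  rw [hi, Set.ncard_image_of_injective _ (add_left_injective _)]

lemma good_step {n s : ℕ} (E : Finset (Fin n × Fin n)) (σ : Equiv.Perm (Fin n)) (h : gr σ ⊆ E)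
    (hU : ∀ U ⊆ gr σ, U.Nonempty → Good s (N n (E \ U) ∅)) : Good (s + 1) (N n E ∅) := by
  apply good_of_diff
  have := good_W (gr σ) E hU
  simpa only [N_shift E σ h] using this

lemma exists_perm {n : ℕ} (E : Finset (Fin n × Fin n)) (r : ℤ) (hr : 1 ≤ r)
    (M : Matrix (Fin n) (Fin n) ℕ) (hM : M ∈ NS n E ∅ r) :
    ∃ σ : Equiv.Perm (Fin n), gr σ ⊆ E := by
  classical
  obtain ⟨h1, _, h3, h4⟩ := hM
  obtain ⟨f, hf, hf'⟩ := (Finset.all_card_le_biUnion_card_iff_exists_injective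
    (fun i : Fin n => Finset.univ.filter (fun j => M i j ≠ 0))).1 (by
      intro A
      set B := A.biUnion (fun i : Fin n => Finset.univ.filter (fun j => M i j ≠ 0)) with hB
      have e1 : ((∑ i ∈ A, ∑ j, M i j : ℕ) : ℤ) = A.card * r := by
        rw [Nat.cast_sum, Finset.sum_congr rfl (fun i _ => h3 i)]; simp
      have e2 : ((∑ j ∈ B, ∑ i, M i j : ℕ) : ℤ) = B.card * r := by
        rw [Nat.cast_sum, Finset.sum_congr rfl (fun i _ => h4 i)]; simp
      have e3 : ∑ i ∈ A, ∑ j, M i j ≤ ∑ j ∈ B, ∑ i, M i j := by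
        have : ∑ i ∈ A, ∑ j, M i j = ∑ i ∈ A, ∑ j ∈ B, M i j := by
          refine Finset.sum_congr rfl (fun i hi => ?_)
          symm
          apply Finset.sum_subset (Finset.subset_univ _)
          intro j _ hj
          by_contra hc
          exact hj (Finset.mem_biUnion.2 ⟨i, hi, by simp [hc]⟩)
        rw [this, Finset.sum_comm]
        exact Finset.sum_le_sum_of_subset (Finset.subset_univ A)
      have e4 : (A.card : ℤ) * r ≤ B.card * r := by rw [← e1, ← e2]; exact_mod_cast e3
      have e5 : (A.card : ℤ) ≤ B.card := le_of_mul_le_mul_right e4 (by omega)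
      exact_mod_cast e5)
  refine ⟨Equiv.ofBijective f (Finite.injective_iff_bijective.1 hf), ?_⟩
  rintro ⟨i, j⟩ hij
  have hij' : f i = j := by simpa [gr] using hij
  by_contra hc
  have := hf' i
  rw [hij'] at this
  simp [h1 i j hc] at this

lemma Good.mono {s t : ℕ} (h : s ≤ t) {g : ℤ → ℚ} (hg : Good t g) : Good s g := by
  obtain ⟨p, hp⟩ := hg
  exact ⟨p, fun r hr => hp r (by omega)⟩

lemma good_zero {n : ℕ} (hn : 0 < n) (E : Finset (Fin n × Fin n)) : Good 0 (N n E ∅) := by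
  induction E using Finset.strongInduction with
  | H E ih =>
    by_cases h : ∃ σ : Equiv.Perm (Fin n), gr σ ⊆ E
    · obtain ⟨σ, hσ⟩ := h
      refine (good_step (s := 0) E σ hσ (fun U hU hne => ih _ ?_)).mono (Nat.zero_le _)
      exact Finset.sdiff_ssubset (hU.trans hσ) hne
    · refine ⟨0, fun r hr => ?_⟩
      have : NS n E ∅ r = ∅ := by
        rw [Set.eq_empty_iff_forall_notMem]
        intro M hM
        exact h (exists_perm E r (by simpa using hr) M hM)
      simp [N, this]

lemma good_shifts {n : ℕ} [NeZero n] (J : Finset (Fin n)) : ∀ E : Finset (Fin n × Fin n),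
    (∀ j ∈ J, gr (Equiv.addRight j) ⊆ E) → Good J.card (N n E ∅) := by
  induction J using Finset.induction_on with
  | empty => intro E _; exact good_zero (Nat.pos_of_ne_zero (NeZero.ne n)) E
  | insert a J ha ih =>
    intro E h
    rw [Finset.card_insert_of_notMem ha]
    refine good_step E (Equiv.addRight a) (h a (by simp)) (fun U hU _ => ih _ ?_)
    intro j hj e he
    refine Finset.mem_sdiff.2 ⟨h j (by simp [hj]) he, fun hc => ?_⟩
    have h1 := hU hc
    rw [mem_gr] at h1 he
    simp only [Equiv.coe_addRight] at h1 he
    have : a = j := add_left_cancel (h1.trans he.symm)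
    exact ha (this ▸ hj)

end Soccer

open Soccer

theorem S_polynomial_roots (n : ℕ) (hn : 3 ≤ n) (P : Polynomial ℚ)
    (hP : ∀ r : ℕ, P.eval (r : ℚ) = S n r) :
    ∀ k : ℤ, 1 ≤ k → k ≤ (n : ℤ) - 2 → P.eval (-(k : ℚ)) = 0 := by
  intro k hk1 hk2
  have : NeZero n := ⟨by omega⟩
  obtain ⟨p, hp⟩ := good_shifts (n := n) (Finset.univ.erase 0)
    (Finset.univ.filter (fun e => e.1 ≠ e.2)) (by
      intro j hj e he
      have hj' : j ≠ 0 := by simpa using hj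
      rw [mem_gr] at he
      simp only [Finset.mem_filter, Finset.mem_univ, true_and, Equiv.coe_addRight] at he ⊢
      intro hc
      rw [← hc] at he
      exact hj' (by simpa using he))
  have hcard : ((Finset.univ.erase (0 : Fin n)).card : ℤ) = n - 1 := by
    rw [Finset.card_erase_of_mem (Finset.mem_univ _), Finset.card_univ, Fintype.card_fin]
    omega
  rw [hcard] at hp
  have hS : ∀ r : ℕ, N n (Finset.univ.filter (fun e => e.1 ≠ e.2)) ∅ (r : ℤ) = S n r := by
    intro r
    unfold N S
    rw [← Nat.card_coe_set_eq]
    congr 1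
    apply Nat.card_congr
    apply Equiv.subtypeEquivRight
    intro M
    simp only [NS, Set.mem_ofPred_eq, Nat.cast_inj]
    constructor
    · rintro ⟨h1, _, h3, h4⟩
      exact ⟨fun i => h1 i i (by simp), h3, h4⟩
    · rintro ⟨h1, h3, h4⟩
      refine ⟨fun i j hij => ?_, by simp, h3, h4⟩
      have : i = j := by simpa using hij
      subst this
      exact h1 i
  have hPp : P = p := by
    apply Polynomial.eq_of_infinite_eval_eq
    refine (Set.infinite_range_of_injective (Nat.cast_injective (R := ℚ))).mono ?_
    rintro _ ⟨r, rfl⟩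
    have h1 := hp r (by omega)
    simp only [Set.mem_ofPred_eq]
    rw [hP, ← hS, h1]
    simp
  have h := hp (-k) (by omega)
  have h0 : NS n (Finset.univ.filter (fun e => e.1 ≠ e.2)) ∅ (-k) = ∅ := by
    rw [Set.eq_empty_iff_forall_notMem]
    rintro M ⟨_, _, h3, _⟩
    have := h3 0
    omega
  rw [hPp]
  simp only [N, h0, Set.ncard_empty] at h
  push_cast at h
  exact h.symm
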